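/- Let F = Σ_{|α|=d−1} X_α Y^α be the full Perazzo form and A_F = R/Ann_R(F) the full Perazzo algebra. Then dim_K A_F = 2·binom(d+m−1, m). -/

import Mathlib

open MvPolynomial

/-- The differential operator `∏_i ∂^{s i}/∂X_i^{s i}` acting on `K[X_i : i ∈ σ]`
(any order of composition gives the same operator, since partial derivatives commute). -/
noncomputable def diffOp {K : Type*} [CommSemiring K] {σ : Type*} [DecidableEq σ]
    (s : σ →₀ ℕ) : Module.End K (MvPolynomial σ K) :=
  (s.support.toList.map fun i =>
    ((MvPolynomial.pderiv i).toLinearMap : Module.End K (MvPolynomial σ K)) ^ s i).prod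

/-- The apolarity (differentiation) action `f ∘ F` of a polynomial `f` on a polynomial `F`:
each variable of `f` acts as partial differentiation with respect to the corresponding
variable of `F`. -/
noncomputable def diffAction {K : Type*} [CommSemiring K] {σ : Type*} [DecidableEq σ]
    (f F : MvPolynomial σ K) : MvPolynomial σ K :=
  ∑ s ∈ f.support, f.coeff s • diffOp s F

/-- The apolar annihilator ideal `Ann(F) = {f : f ∘ F = 0}`.  (This set is already an
ideal, so taking the ideal span does not change it.) -/
noncomputable def annIdeal {K : Type*} [CommSemiring K] {σ : Type*} [DecidableEq σ]
    (F : MvPolynomial σ K) : Ideal (MvPolynomial σ K) :=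
  Ideal.span {f | diffAction f F = 0}

/-- Multi-indices `α = (i_1, …, i_m) ∈ ℕ^m` with `i_1 + ⋯ + i_m = d - 1`,
indexing the `x`-variables of a full Perazzo algebra. -/
abbrev MIdx (m d : ℕ) := {α : Fin m → ℕ // ∑ i, α i = d - 1}

instance (m d : ℕ) : Fintype (MIdx m d) :=
  Fintype.ofFinset (Finset.Nat.antidiagonalTuple m (d - 1))
    (fun _ => Finset.Nat.mem_antidiagonalTuple)

/-- The variable index set of a full Perazzo algebra:
`x_α` for `|α| = d - 1` together with `y_1, …, y_m`. -/
abbrev PIdx (m d : ℕ) := MIdx m d ⊕ Fin m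

/-- The full Perazzo form `F = ∑_{|α| = d-1} X_α Y^α`. -/
noncomputable def perazzoForm (K : Type*) [CommSemiring K] (m d : ℕ) :
    MvPolynomial (PIdx m d) K :=
  ∑ α : MIdx m d, X (Sum.inl α) * ∏ j, X (Sum.inr j) ^ (α.1 j)

/-! `R / Ann(F)` is isomorphic to the space of all partial derivatives of `F`. Since `F` is linear
in the variables `X_α`, the only monomial derivatives that can be nonzero are the `y^c ∘ F` and
the `x_α y^c ∘ F = α! / (α - c)! · Y^(α - c)`. These coefficients are invertible because they divide
`(d - 1)!`, so every `Y^b` with `|b| ≤ d - 1` is a derivative of `F`. The `Y^b` and the `y^c ∘ F`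
with `|b|, |c| ≤ d - 1` form a basis: `y^c ∘ F` is the only member of it containing
`X_α Y^(α - c)`. -/

section MultiIndex

variable {σ : Type*}

/-- The multi-index falling factorial, which is `t! / (t - s)!` for `s ≤ t` and `0` otherwise: the
coefficient of `X^(t - s)` in `∂^s X^t`. -/
def multiDescFactorial (t s : σ →₀ ℕ) : ℕ :=
  s.prod fun i k => (t i).descFactorial k

lemma multiDescFactorial_zero (t : σ →₀ ℕ) : multiDescFactorial t 0 = 1 :=
  Finsupp.prod_zero_index

lemma multiDescFactorial_eq_zero_of_not_le {s t : σ →₀ ℕ} (h : ¬ s ≤ t) :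
    multiDescFactorial t s = 0 := by
  obtain ⟨i, hi⟩ := not_forall.mp h
  have hlt : t i < s i := not_le.mp hi
  exact Finset.prod_eq_zero (Finsupp.mem_support_iff.mpr (by omega))
    (Nat.descFactorial_of_lt hlt)

lemma multiDescFactorial_add (t r s : σ →₀ ℕ) :
    multiDescFactorial t (r + s) = multiDescFactorial t s * multiDescFactorial (t - s) r := by
  classical
  unfold multiDescFactorial
  rw [Finsupp.prod_of_support_subset (r + s) Finsupp.support_add _ (by simp),
    Finsupp.prod_of_support_subset s Finset.subset_union_right _ (by simp),
    Finsupp.prod_of_support_subset r Finset.subset_union_left _ (by simp),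
    ← Finset.prod_mul_distrib]
  refine Finset.prod_congr rfl fun i _ => ?_
  have h := Nat.descFactorial_mul_descFactorial (n := t i) (Nat.le_add_left (s i) (r i))
  rw [Nat.add_sub_cancel] at h
  rw [Finsupp.add_apply, Finsupp.tsub_apply, ← h, mul_comm]

open Nat in
lemma multiDescFactorial_dvd_factorial_degree {s t : σ →₀ ℕ} (h : s ≤ t) :
    multiDescFactorial t s ∣ t.degree ! := by
  have prod_dvd : multiDescFactorial t s ∣ ∏ i ∈ s.support, (t i)! :=
    Finset.prod_dvd_prod_of_dvd _ _ fun i _ =>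
      Dvd.intro_left _ (factorial_mul_descFactorial (h i))
  have sum_le : ∑ i ∈ s.support, t i ≤ t.degree :=
    Finset.sum_le_sum_of_subset (Finsupp.support_mono h)
  exact prod_dvd.trans <|
    (prod_factorial_dvd_factorial_sum _ _).trans (factorial_dvd_factorial sum_le)

lemma multiDescFactorial_sumElim {τ : Type*} (a b : σ →₀ ℕ) (c e : τ →₀ ℕ) :
    multiDescFactorial (a.sumElim c) (b.sumElim e) =
      multiDescFactorial a b * multiDescFactorial c e :=
  Finsupp.prod_sumElim _ _ _

lemma sumElim_tsub_sumElim {τ : Type*} (a b : σ →₀ ℕ) (c e : τ →₀ ℕ) :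
    a.sumElim c - b.sumElim e = (a - b).sumElim (c - e) := by
  ext (i | j) <;> rfl

lemma sumElim_inj {τ : Type*} {a b : σ →₀ ℕ} {c e : τ →₀ ℕ} :
    a.sumElim c = b.sumElim e ↔ a = b ∧ c = e := by
  simpa using (Finsupp.sumFinsuppEquivProdFinsupp (α := σ) (β := τ) (γ := ℕ)).symm.injective.eq_iff
    (a := (a, c)) (b := (b, e))

lemma eq_zero_or_eq_single_of_le_single {a : σ →₀ ℕ} {i : σ} (h : a ≤ Finsupp.single i 1) :
    a = 0 ∨ a = Finsupp.single i 1 := by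
  have a_eq : a = Finsupp.single i (a i) := by
    ext j
    rcases eq_or_ne j i with rfl | hj
    · simp
    · simpa [hj] using h j
  have hi : a i ≤ 1 := by simpa using h i
  rcases Nat.le_one_iff_eq_zero_or_eq_one.mp hi with h0 | h1
  · left; rw [a_eq, h0, Finsupp.single_zero]
  · right; rw [a_eq, h1]

lemma exists_le_degree_eq_of_degree_le [Nonempty σ] {c : σ →₀ ℕ} {n : ℕ} (h : c.degree ≤ n) :
    ∃ e, c ≤ e ∧ e.degree = n := by
  refine ⟨c + Finsupp.single (Classical.arbitrary σ) (n - c.degree), le_self_add, ?_⟩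
  rw [map_add, Finsupp.degree_single, Nat.add_sub_cancel' h]

lemma sum_range_multichoose (k n : ℕ) :
    ∑ i ∈ Finset.range (n + 1), k.multichoose i = (k + 1).multichoose n := by
  induction n with
  | zero => simp
  | succ n ih => rw [Finset.sum_range_succ, ih, Nat.multichoose_succ_succ, add_comm]

lemma card_degree_le [Fintype σ] (n : ℕ) :
    Nat.card {c : σ →₀ ℕ // c.degree ≤ n} = (n + Fintype.card σ).choose (Fintype.card σ) := by
  classical
  have by_degree : {c : σ →₀ ℕ | c.degree ≤ n} =
      ↑((Finset.range (n + 1)).biUnion fun i => (Finset.univ : Finset σ).finsuppAntidiag i) := by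
    ext c
    simp [Finset.mem_finsuppAntidiag, Finsupp.degree_eq_sum]
  have disjoint : (Finset.range (n + 1) : Set ℕ).PairwiseDisjoint
      fun i => (Finset.univ : Finset σ).finsuppAntidiag i := by
    intro i _ j _ hij
    refine Finset.disjoint_left.mpr fun c hi hj => hij ?_
    rw [← (Finset.mem_finsuppAntidiag.mp hi).1, (Finset.mem_finsuppAntidiag.mp hj).1]
  calc Nat.card {c : σ →₀ ℕ // c.degree ≤ n}
      = ∑ i ∈ Finset.range (n + 1), (Fintype.card σ).multichoose i := by
        rw [← Set.coe_ofPred, Nat.card_coe_set_eq, by_degree, Set.ncard_coe_finset,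
          Finset.card_biUnion disjoint]
        simp only [Finset.card_finsuppAntidiag_nat_eq_multichoose, Finset.card_univ]
    _ = (n + Fintype.card σ).choose (Fintype.card σ) := by
        rw [sum_range_multichoose, Nat.multichoose_eq, Nat.add_right_comm, Nat.add_sub_cancel,
          add_comm, Nat.choose_symm_add]

end MultiIndex

section Apolarity

variable {K σ : Type*} [CommSemiring K]

lemma pderiv_pow_monomial (i : σ) (n : ℕ) (t : σ →₀ ℕ) (a : K) :
    ((pderiv i).toLinearMap ^ n : Module.End K (MvPolynomial σ K)) (monomial t a) =
      monomial (t - Finsupp.single i n) (a * (t i).descFactorial n) := by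
  induction n with
  | zero => simp
  | succ n ih =>
    rw [pow_succ', Module.End.mul_apply, ih, Derivation.coeFn_coe, pderiv_monomial,
      tsub_tsub, ← Finsupp.single_add, Finsupp.tsub_apply, Finsupp.single_eq_same,
      Nat.descFactorial_succ, Nat.cast_mul, mul_assoc, mul_comm (Nat.cast (t i - n))]

lemma prod_pderiv_pow_monomial (s t : σ →₀ ℕ) (a : K) {l : List σ} (hl : l.Nodup) :
    (l.map fun i => ((pderiv i).toLinearMap : Module.End K (MvPolynomial σ K)) ^ s i).prod
        (monomial t a) =
      monomial (t - (l.map fun i => Finsupp.single i (s i)).sum)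
        (a * ((l.map fun i => (t i).descFactorial (s i)).prod : ℕ)) := by
  induction l with
  | nil => simp
  | cons i l ih =>
    obtain ⟨hi, hl⟩ := List.nodup_cons.mp hl
    have untouched : (l.map fun j => Finsupp.single j (s j)).sum i = 0 := by
      rw [← Finsupp.applyAddHom_apply, map_list_sum, List.map_map]
      refine List.sum_eq_zero fun x hx => ?_
      obtain ⟨j, hj, rfl⟩ := List.mem_map.mp hx
      exact Finsupp.single_eq_of_ne (fun h => hi (h ▸ hj))
    simp only [List.map_cons, List.prod_cons, List.sum_cons, Module.End.mul_apply, ih hl,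
      pderiv_pow_monomial, Finsupp.tsub_apply, untouched, tsub_zero, tsub_tsub, Nat.cast_mul,
      mul_assoc, add_comm (Finsupp.single i (s i)), mul_comm (Nat.cast ((t i).descFactorial _))]

variable [DecidableEq σ]

lemma diffOp_monomial (s t : σ →₀ ℕ) (a : K) :
    diffOp s (monomial t a) = monomial (t - s) (a * multiDescFactorial t s) := by
  rw [diffOp, prod_pderiv_pow_monomial s t a s.support.nodup_toList, Finset.sum_map_toList,
    Finset.prod_map_toList]
  congr 2
  exact congrArg (t - ·) s.sum_single

lemma diffOp_zero : diffOp (0 : σ →₀ ℕ) = (1 : Module.End K _) := by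
  simp [diffOp]

lemma diffOp_add (r s : σ →₀ ℕ) :
    diffOp (r + s) = (diffOp r * diffOp s : Module.End K (MvPolynomial σ K)) := by
  refine (basisMonomials σ K).ext fun t => ?_
  simp only [coe_basisMonomials, Module.End.mul_apply, diffOp_monomial, multiDescFactorial_add,
    tsub_tsub, add_comm, Nat.cast_mul, mul_assoc]

variable (K σ) in
/-- Apolarity as an algebra homomorphism: a polynomial `f` goes to the differential operator
`F ↦ f ∘ F`. -/
noncomputable def apolarAlgHom : MvPolynomial σ K →ₐ[K] Module.End K (MvPolynomial σ K) :=
  AddMonoidAlgebra.lift K _ (σ →₀ ℕ)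
    { toFun := fun s => diffOp s.toAdd
      map_one' := diffOp_zero
      map_mul' := fun r s => diffOp_add r.toAdd s.toAdd }

lemma apolarAlgHom_apply (f F : MvPolynomial σ K) :
    apolarAlgHom K σ f F = diffAction f F := by
  rw [apolarAlgHom, AddMonoidAlgebra.lift_apply, Finsupp.sum, LinearMap.sum_apply]
  rfl

lemma apolarAlgHom_monomial_one (s : σ →₀ ℕ) :
    apolarAlgHom K σ (monomial s 1) = diffOp s :=
  (AddMonoidAlgebra.lift_single _ _ _).trans (one_smul _ _)

lemma mem_annIdeal_iff {f F : MvPolynomial σ K} : f ∈ annIdeal F ↔ diffAction f F = 0 := by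
  refine ⟨fun hf => ?_, fun hf => Ideal.subset_span hf⟩
  simp only [← apolarAlgHom_apply]
  induction hf using Submodule.span_induction with
  | mem f hf => exact (apolarAlgHom_apply f F).trans hf
  | zero => simp
  | add f g _ _ hf hg => simp [hf, hg]
  | smul g f _ hf => simp [hf]

/-- The `K`-linear map `f ↦ f ∘ F`, whose kernel is `Ann(F)` and whose range is the space of
all partial derivatives of `F`. -/
noncomputable def apolarMap (F : MvPolynomial σ K) : MvPolynomial σ K →ₗ[K] MvPolynomial σ K :=
  LinearMap.applyₗ F ∘ₗ (apolarAlgHom K σ).toLinearMap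

lemma ker_apolarMap (F : MvPolynomial σ K) :
    LinearMap.ker (apolarMap F) = (annIdeal F).restrictScalars K := by
  ext f
  rw [Submodule.restrictScalars_mem, mem_annIdeal_iff, ← apolarAlgHom_apply]
  rfl

lemma range_apolarMap (F : MvPolynomial σ K) :
    LinearMap.range (apolarMap F) = Submodule.span K (Set.range fun s => diffOp s F) := by
  rw [LinearMap.range_eq_map, ← (basisMonomials σ K).span_eq, Submodule.map_span, ← Set.range_comp]
  congr 2
  ext1 s
  exact congrArg (· F) (apolarAlgHom_monomial_one s)

theorem finrank_quotient_annIdeal {R : Type*} [CommRing R] (F : MvPolynomial σ R) :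
    Module.finrank R (MvPolynomial σ R ⧸ annIdeal F) =
      Module.finrank R (Submodule.span R (Set.range fun s => diffOp s F)) := by
  rw [← range_apolarMap, ← (apolarMap F).quotKerEquivRange.finrank_eq, ker_apolarMap]
  exact (Submodule.Quotient.restrictScalarsEquiv R (annIdeal F)).symm.finrank_eq

end Apolarity

section Perazzo

variable {K : Type*} [CommSemiring K] {m d : ℕ}

/-- The exponent of the monomial `Y^α` multiplied by `X_α` in the Perazzo form, as a finitely
supported function. -/
noncomputable def yExponent (α : MIdx m d) : Fin m →₀ ℕ :=
  Finsupp.equivFunOnFinite.symm α.1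

lemma degree_yExponent (α : MIdx m d) : (yExponent α).degree = d - 1 :=
  (Finsupp.degree_eq_sum _).trans α.2

lemma exists_le_yExponent [NeZero m] {c : Fin m →₀ ℕ} (hc : c.degree ≤ d - 1) :
    ∃ α : MIdx m d, c ≤ yExponent α := by
  obtain ⟨e, hce, he⟩ := exists_le_degree_eq_of_degree_le hc
  exact ⟨⟨e, (Finsupp.degree_eq_sum e).symm.trans he⟩, hce⟩

lemma perazzoForm_eq_sum_monomial :
    perazzoForm K m d =
      ∑ α : MIdx m d, monomial ((Finsupp.single α 1).sumElim (yExponent α)) 1 := by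
  refine Finset.sum_congr rfl fun α _ => ?_
  rw [monomial_eq, C_1, one_mul, Finsupp.prod_sumElim,
    Finsupp.prod_single_index (h := (fun n e => X n ^ e) ∘ Sum.inl) (pow_zero _),
    Finsupp.prod_fintype _ ((fun n e => X n ^ e) ∘ Sum.inr) fun _ => pow_zero _]
  simp [yExponent]

lemma diffOp_perazzoForm (a : MIdx m d →₀ ℕ) (c : Fin m →₀ ℕ) :
    diffOp (a.sumElim c) (perazzoForm K m d) =
      ∑ α : MIdx m d, monomial ((Finsupp.single α 1 - a).sumElim (yExponent α - c))
        ((multiDescFactorial (Finsupp.single α 1) a *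
          multiDescFactorial (yExponent α) c : ℕ) : K) := by
  simp only [perazzoForm_eq_sum_monomial, map_sum, diffOp_monomial, sumElim_tsub_sumElim,
    multiDescFactorial_sumElim, one_mul]

lemma diffOp_y_perazzoForm (c : Fin m →₀ ℕ) :
    diffOp (Finsupp.sumElim 0 c) (perazzoForm K m d) =
      ∑ α : MIdx m d, monomial ((Finsupp.single α 1).sumElim (yExponent α - c))
        (multiDescFactorial (yExponent α) c : K) := by
  simp only [diffOp_perazzoForm, tsub_zero, multiDescFactorial_zero, one_mul]

lemma diffOp_y_perazzoForm_eq_zero {c : Fin m →₀ ℕ} (hc : d - 1 < c.degree) :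
    diffOp (Finsupp.sumElim 0 c) (perazzoForm K m d) = 0 := by
  rw [diffOp_y_perazzoForm]
  refine Finset.sum_eq_zero fun α _ => ?_
  have not_le : ¬ c ≤ yExponent α := fun h =>
    (Finsupp.degree_mono h).not_gt (degree_yExponent α ▸ hc)
  rw [multiDescFactorial_eq_zero_of_not_le not_le, Nat.cast_zero, monomial_zero]

lemma diffOp_xy_perazzoForm (α : MIdx m d) (c : Fin m →₀ ℕ) :
    diffOp ((Finsupp.single α 1).sumElim c) (perazzoForm K m d) =
      monomial (Finsupp.sumElim 0 (yExponent α - c)) (multiDescFactorial (yExponent α) c : K) := by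
  rw [diffOp_perazzoForm, Finset.sum_eq_single α]
  · have self : multiDescFactorial (Finsupp.single α 1) (Finsupp.single α 1) = 1 := by
      simp [multiDescFactorial]
    rw [tsub_self, self, one_mul]
  · intro β _ hβ
    have not_le : ¬ Finsupp.single α 1 ≤ Finsupp.single β 1 := fun h => by
      simpa [hβ] using h α
    rw [multiDescFactorial_eq_zero_of_not_le not_le, zero_mul, Nat.cast_zero, monomial_zero]
  · simp

lemma diffOp_perazzoForm_eq_zero {a : MIdx m d →₀ ℕ} (c : Fin m →₀ ℕ)
    (h0 : a ≠ 0) (h1 : ∀ α, a ≠ Finsupp.single α 1) :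
    diffOp (a.sumElim c) (perazzoForm K m d) = 0 := by
  rw [diffOp_perazzoForm]
  refine Finset.sum_eq_zero fun α _ => ?_
  have not_le : ¬ a ≤ Finsupp.single α 1 := fun h =>
    (eq_zero_or_eq_single_of_le_single h).elim h0 (h1 α)
  rw [multiDescFactorial_eq_zero_of_not_le not_le, zero_mul, Nat.cast_zero, monomial_zero]

lemma coeff_y_diffOp_y_perazzoForm (b c : Fin m →₀ ℕ) :
    coeff (Finsupp.sumElim 0 b) (diffOp (Finsupp.sumElim 0 c) (perazzoForm K m d)) = 0 := by
  rw [diffOp_y_perazzoForm, coeff_sum]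
  refine Finset.sum_eq_zero fun α _ => ?_
  rw [coeff_monomial, if_neg]
  simp [sumElim_inj]

lemma coeff_xy_diffOp_y_perazzoForm (α : MIdx m d) (b c : Fin m →₀ ℕ) :
    coeff ((Finsupp.single α 1).sumElim b) (diffOp (Finsupp.sumElim 0 c) (perazzoForm K m d)) =
      if yExponent α - c = b then (multiDescFactorial (yExponent α) c : K) else 0 := by
  rw [diffOp_y_perazzoForm, coeff_sum, Finset.sum_eq_single α]
  · simp [coeff_monomial, sumElim_inj]
  · intro β _ hβ
    rw [coeff_monomial, if_neg]
    simp [sumElim_inj, Finsupp.single_left_inj, hβ]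
  · simp

lemma coeff_xy_diffOp_y_perazzoForm_eq_zero {α : MIdx m d} {b c : Fin m →₀ ℕ}
    (hc : c ≤ yExponent α) (hbc : b ≠ c) :
    coeff ((Finsupp.single α 1).sumElim (yExponent α - c))
      (diffOp (Finsupp.sumElim 0 b) (perazzoForm K m d)) = 0 := by
  rw [coeff_xy_diffOp_y_perazzoForm]
  by_cases hb : b ≤ yExponent α
  · have hne : yExponent α - b ≠ yExponent α - c := fun h =>
      hbc (by rw [← tsub_tsub_cancel_of_le hb, h, tsub_tsub_cancel_of_le hc])
    rw [if_neg hne]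
  · rw [multiDescFactorial_eq_zero_of_not_le hb, Nat.cast_zero, ite_self]

/-- Exponents of the monomials in `Y_1, …, Y_m` of degree at most `d - 1`. -/
abbrev LowExponent (m d : ℕ) := {c : Fin m →₀ ℕ // c.degree ≤ d - 1}

variable (K m d) in
/-- The basis of the space of partial derivatives of the Perazzo form `F`: the derivatives
`y^c ∘ F`, followed by the monomials `Y^b`, with `|b|, |c| ≤ d - 1`. -/
noncomputable def perazzoBasis :
    LowExponent m d ⊕ LowExponent m d → MvPolynomial (PIdx m d) K :=
  Sum.elim (fun c => diffOp (Finsupp.sumElim 0 c.1) (perazzoForm K m d))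
    (fun b => monomial (Finsupp.sumElim 0 b.1) 1)

lemma isUnit_multiDescFactorial_yExponent (hK : IsUnit ((d - 1).factorial : K))
    {α : MIdx m d} {c : Fin m →₀ ℕ} (hc : c ≤ yExponent α) :
    IsUnit (multiDescFactorial (yExponent α) c : K) :=
  isUnit_of_dvd_unit
    (Nat.cast_dvd_cast (degree_yExponent α ▸ multiDescFactorial_dvd_factorial_degree hc)) hK

lemma diffOp_perazzoForm_mem_span_perazzoBasis (s : PIdx m d →₀ ℕ) :
    diffOp s (perazzoForm K m d) ∈ Submodule.span K (Set.range (perazzoBasis K m d)) := by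
  obtain ⟨⟨a, c⟩, rfl⟩ := Finsupp.sumFinsuppEquivProdFinsupp.symm.surjective s
  change diffOp (a.sumElim c) _ ∈ _
  by_cases h0 : a = 0
  · subst h0
    rcases le_or_gt c.degree (d - 1) with hc | hc
    · exact Submodule.subset_span ⟨Sum.inl ⟨c, hc⟩, rfl⟩
    · rw [diffOp_y_perazzoForm_eq_zero hc]
      exact Submodule.zero_mem _
  by_cases h1 : ∃ α, a = Finsupp.single α 1
  · obtain ⟨α, rfl⟩ := h1
    have low : (yExponent α - c).degree ≤ d - 1 :=
      degree_yExponent α ▸ Finsupp.degree_mono tsub_le_self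
    rw [diffOp_xy_perazzoForm, ← mul_one (Nat.cast _), ← smul_eq_mul, ← smul_monomial]
    exact Submodule.smul_mem _ _ (Submodule.subset_span ⟨Sum.inr ⟨_, low⟩, rfl⟩)
  · rw [diffOp_perazzoForm_eq_zero c h0 (not_exists.mp h1)]
    exact Submodule.zero_mem _

lemma monomial_y_mem_span_diffOp_perazzoForm [NeZero m]
    (hK : IsUnit ((d - 1).factorial : K)) {b : Fin m →₀ ℕ} (hb : b.degree ≤ d - 1) :
    monomial (Finsupp.sumElim 0 b) 1 ∈
      Submodule.span K (Set.range fun s => diffOp s (perazzoForm K m d)) := by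
  obtain ⟨α, hα⟩ := exists_le_yExponent hb
  have unit := isUnit_multiDescFactorial_yExponent hK (tsub_le_self : yExponent α - b ≤ _)
  have derivative : diffOp ((Finsupp.single α 1).sumElim (yExponent α - b)) (perazzoForm K m d) =
      (multiDescFactorial (yExponent α) (yExponent α - b) : K) •
        monomial (Finsupp.sumElim 0 b) 1 := by
    rw [diffOp_xy_perazzoForm, tsub_tsub_cancel_of_le hα, smul_monomial, smul_eq_mul, mul_one]
  rw [← Submodule.smul_mem_iff_of_isUnit _ unit, ← derivative]
  exact Submodule.subset_span ⟨_, rfl⟩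

lemma span_perazzoBasis [NeZero m] (hK : IsUnit ((d - 1).factorial : K)) :
    Submodule.span K (Set.range (perazzoBasis K m d)) =
      Submodule.span K (Set.range fun s => diffOp s (perazzoForm K m d)) := by
  refine le_antisymm (Submodule.span_le.mpr ?_) (Submodule.span_le.mpr ?_)
  · rintro _ ⟨c | b, rfl⟩
    · exact Submodule.subset_span ⟨_, rfl⟩
    · exact monomial_y_mem_span_diffOp_perazzoForm hK b.2
  · rintro _ ⟨s, rfl⟩
    exact diffOp_perazzoForm_mem_span_perazzoBasis s

lemma linearIndependent_perazzoBasis {R : Type*} [CommRing R] [NeZero m]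
    (hR : IsUnit ((d - 1).factorial : R)) : LinearIndependent R (perazzoBasis R m d) := by
  choose α hα using fun c : LowExponent m d => exists_le_yExponent c.2
  have unit (c : LowExponent m d) := isUnit_multiDescFactorial_yExponent hR (hα c)
  let dual : LowExponent m d ⊕ LowExponent m d → Module.Dual R (MvPolynomial (PIdx m d) R) :=
    Sum.elim
      (fun c => (↑(unit c).unit⁻¹ : R) •
        lcoeff R ((Finsupp.single (α c) 1).sumElim (yExponent (α c) - c.1)))
      (fun b => lcoeff R (Finsupp.sumElim 0 b.1))
  refine LinearIndependent.of_pairwise_dual_eq_zero_one _ dual ?_ ?_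
  · rintro (c | b) (c' | b') hne
    · have hne' : c'.1 ≠ c.1 := fun h => hne (by rw [Subtype.ext h])
      simp [dual, perazzoBasis, coeff_xy_diffOp_y_perazzoForm_eq_zero (hα c) hne']
    · have hne' : (0 : MIdx m d →₀ ℕ) ≠ Finsupp.single (α c) 1 := by
        simp [eq_comm]
      simp [dual, perazzoBasis, coeff_monomial, sumElim_inj, hne']
    · exact coeff_y_diffOp_y_perazzoForm _ _
    · have hne' : b'.1 ≠ b.1 := fun h => hne (by rw [Subtype.ext h])
      simp [dual, perazzoBasis, coeff_monomial, sumElim_inj, hne']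
  · rintro (c | b)
    · simp [dual, perazzoBasis, coeff_xy_diffOp_y_perazzoForm]
    · simp [dual, perazzoBasis]

end Perazzo

theorem finrank_fullPerazzo_general
    (K : Type*) [CommRing K] [Nontrivial K] (m d : ℕ) (hm : 1 ≤ m) (hd : 1 ≤ d)
    (hK : IsUnit ((d - 1).factorial : K)) :
    Module.finrank K (MvPolynomial (PIdx m d) K ⧸ annIdeal (perazzoForm K m d))
      = 2 * Nat.choose (d + m - 1) m := by
  have : NeZero m := ⟨by omega⟩
  have : Fintype (LowExponent m d) := (Finsupp.finite_of_degree_le (d - 1)).fintype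
  calc
    _ = Module.finrank K (Submodule.span K (Set.range (perazzoBasis K m d))) := by
      rw [finrank_quotient_annIdeal, span_perazzoBasis hK]
    _ = 2 * Nat.card (LowExponent m d) := by
      rw [finrank_span_eq_card (linearIndependent_perazzoBasis hK), Fintype.card_sum, ← two_mul,
        Nat.card_eq_fintype_card]
    _ = 2 * (d - 1 + m).choose m := by rw [card_degree_le, Fintype.card_fin]
    _ = 2 * (d + m - 1).choose m := by rw [Nat.sub_add_comm hd]

/-- The `K`-vector-space dimension of the full Perazzo algebra `A_F` is
`2·binom(d+m-1, m)`. -/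
theorem finrank_fullPerazzo
    (K : Type*) [Field K] [CharZero K] (m d : ℕ) (hm : 2 ≤ m) (hd : 3 ≤ d) :
    Module.finrank K (MvPolynomial (PIdx m d) K ⧸ annIdeal (perazzoForm K m d))
      = 2 * Nat.choose (d + m - 1) m := by
  have hK : IsUnit ((d - 1).factorial : K) :=
    IsUnit.mk0 _ (Nat.cast_ne_zero.mpr (Nat.factorial_ne_zero _))
  exact finrank_fullPerazzo_general K m d (by omega) (by omega) hK
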